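/- arXiv:2512.07002 — 3 statements merged into one kernel-verified Lean document; each statement's English description precedes it below -/
import Mathlib

section
/- Let μ be the evolution algebra structure on ℂ² relative to the basis e₁, e₂ given by μ(e₁,e₁) = e₁ and μ(e₂,e₂) = 0 (the algebra 𝓔₁). Then a 2-cocycle θ ∈ Z²(ℂ²) is a 2-coboundary for μ if and only if θ(e₂,e₂) = 0; that is, B²(μ) consists exactly of those θ ∈ Z²(ℂ²) whose structure matrix has the form (a b; 0 0) with a,b ∈ ℂ. -/
/-!
Writing `f` for the coordinate along the idempotent basis vector `x`, the product is
`μ u v = f u • f v • x` with `f x = 1`. Every coboundary `δ_μ φ` vanishes on pairs of vectors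
killed by `f`, which is the necessary condition. Conversely, for `φ = f · w` the coboundary is
`f u • f v • (w - 2 f(w) x)`; since `w ↦ w - 2 f(w) x` is a reflection, it is surjective, and every
bilinear map `f u • f v • t` is reached.
-/

open Module

section Coboundary

variable {R M : Type*} [CommRing R] [AddCommGroup M] [Module R M]

/-- The coboundary `δ_μ φ` of an endomorphism `φ` for the (not necessarily associative or
commutative) product `μ`, as a bilinear map. -/
def coboundary (μ : M →ₗ[R] M →ₗ[R] M) (φ : M →ₗ[R] M) : M →ₗ[R] M →ₗ[R] M :=
  μ.compr₂ φ - μ.compl₂ φ - μ.comp φ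

theorem coboundary_apply (μ : M →ₗ[R] M →ₗ[R] M) (φ : M →ₗ[R] M) (u v : M) :
    coboundary μ φ u v = φ (μ u v) - μ u (φ v) - μ (φ u) v :=
  rfl

/-- `θ` is a 2-coboundary for the product `μ`. Membership of `θ` in the space of 2-cocycles, which
depends on a basis, is not part of this predicate. -/
def IsCoboundary (μ θ : M →ₗ[R] M →ₗ[R] M) : Prop :=
  ∃ φ : M →ₗ[R] M, θ = coboundary μ φ

theorem isCoboundary_iff {μ θ : M →ₗ[R] M →ₗ[R] M} :
    IsCoboundary μ θ ↔
      ∃ φ : M →ₗ[R] M, ∀ u v, θ u v = φ (μ u v) - μ u (φ v) - μ (φ u) v := by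
  simp only [IsCoboundary, LinearMap.ext_iff₂, coboundary_apply]

/-- The symmetric bilinear map `(u, v) ↦ f u • f v • x`, the product of an evolution algebra in
which at most one basis vector has a nonzero square. -/
def rankOneProduct (f : Dual R M) (x : M) : M →ₗ[R] M →ₗ[R] M :=
  f.smulRight (f.smulRight x)

theorem rankOneProduct_apply (f : Dual R M) (x u v : M) :
    rankOneProduct f x u v = f u • f v • x :=
  rfl

theorem coboundary_rankOneProduct_smulRight (f : Dual R M) (x w : M) :
    coboundary (rankOneProduct f x) (f.smulRight w) =
      rankOneProduct f (f x • w - (2 * f w) • x) := by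
  ext u v
  simp only [coboundary_apply, rankOneProduct_apply, LinearMap.smulRight_apply, map_smul,
    LinearMap.smul_apply]
  module

theorem isCoboundary_rankOneProduct {f : Dual R M} {x : M} (hfx : f x = 1) (t : M) :
    IsCoboundary (rankOneProduct f x) (rankOneProduct f t) := by
  have reflection_involutive : Function.Involutive (preReflection x (2 • f)) :=
    involutive_preReflection (by simp [hfx])
  obtain ⟨w, rfl⟩ := reflection_involutive.surjective t
  refine ⟨f.smulRight w, ?_⟩
  rw [coboundary_rankOneProduct_smulRight, hfx, one_smul]
  simp [preReflection_apply]

theorem IsCoboundary.apply_eq_zero {f : Dual R M} {x : M} {θ : M →ₗ[R] M →ₗ[R] M}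
    (h : IsCoboundary (rankOneProduct f x) θ) {u v : M} (hu : f u = 0) (hv : f v = 0) :
    θ u v = 0 := by
  obtain ⟨φ, rfl⟩ := h
  simp [coboundary_apply, rankOneProduct_apply, hu, hv]

end Coboundary

section Basis

variable {R M ι : Type*} [CommRing R] [AddCommGroup M] [Module R M]

theorem eq_rankOneProduct_of_isOrthoᵢ (b : Basis ι R M) {θ : M →ₗ[R] M →ₗ[R] M}
    (hθ : θ.IsOrthoᵢ b) {i₀ : ι} (hθ₀ : ∀ i ≠ i₀, θ (b i) (b i) = 0) :
    θ = rankOneProduct (b.coord i₀) (θ (b i₀) (b i₀)) := by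
  classical
  refine b.ext fun i ↦ b.ext fun j ↦ ?_
  rw [rankOneProduct_apply, b.coord_apply, b.coord_apply, b.repr_self_apply, b.repr_self_apply]
  rcases eq_or_ne i j with rfl | hij
  · rcases eq_or_ne i i₀ with rfl | hi
    · simp
    · simp [hθ₀ i hi, hi]
  · rw [LinearMap.isOrthoᵢ_def.mp hθ i j hij]
    rcases eq_or_ne i i₀ with rfl | hi
    · simp [hij.symm]
    · simp [hi]

theorem stmt7_general (b : Basis ι R M) (i₀ : ι) {μ θ : M →ₗ[R] M →ₗ[R] M}
    (hμ : μ.IsOrthoᵢ b) (hμ_idem : μ (b i₀) (b i₀) = b i₀) (hμ_zero : ∀ i ≠ i₀, μ (b i) (b i) = 0)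
    (hθ : θ.IsOrthoᵢ b) :
    IsCoboundary μ θ ↔ ∀ i ≠ i₀, θ (b i) (b i) = 0 := by
  have μ_eq : μ = rankOneProduct (b.coord i₀) (b i₀) := by
    simpa only [hμ_idem] using eq_rankOneProduct_of_isOrthoᵢ b hμ hμ_zero
  rw [μ_eq]
  constructor
  · intro h i hi
    have coord_eq_zero : b.coord i₀ (b i) = 0 := by simp [hi]
    exact h.apply_eq_zero coord_eq_zero coord_eq_zero
  · intro hθ_zero
    rw [eq_rankOneProduct_of_isOrthoᵢ b hθ hθ_zero]
    exact isCoboundary_rankOneProduct (by simp) _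

end Basis

/-- For the evolution algebra `𝓔₁` on `ℂ²` with `e₁² = e₁`, `e₂² = 0`,
a 2-cocycle `θ` is a 2-coboundary if and only if `θ(e₂,e₂) = 0`. -/
theorem stmt7 (e : Fin 2 → (Fin 2 → ℂ)) (he : ∀ i, e i = Pi.single i 1)
    (μ θ : (Fin 2 → ℂ) →ₗ[ℂ] (Fin 2 → ℂ) →ₗ[ℂ] (Fin 2 → ℂ))
    (hμz : ∀ i j : Fin 2, i ≠ j → μ (e i) (e j) = 0)
    (hμ0 : μ (e 0) (e 0) = e 0) (hμ1 : μ (e 1) (e 1) = 0)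
    (hθz : ∀ i j : Fin 2, i ≠ j → θ (e i) (e j) = 0) :
    (∃ φ : (Fin 2 → ℂ) →ₗ[ℂ] (Fin 2 → ℂ),
        ∀ u v : Fin 2 → ℂ, θ u v = φ (μ u v) - μ u (φ v) - μ (φ u) v) ↔
    θ (e 1) (e 1) = 0 := by
  obtain rfl : e = Pi.basisFun ℂ (Fin 2) := funext fun i ↦ by rw [he, Pi.basisFun_apply]
  rw [← isCoboundary_iff, stmt7_general _ 0 (LinearMap.isOrthoᵢ_def.mpr hμz) hμ0
    (by simpa [Fin.forall_fin_two] using hμ1) (LinearMap.isOrthoᵢ_def.mpr hθz)]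
  simp [Fin.forall_fin_two]
end

section
/- On ℂ³ with basis e₁, e₂, e₃, consider the nilpotent evolution algebra structures μ_{3,2}: e₁² = e₂, e₂² = e₃² = 0; μ_{3,3}: e₁² = e₂² = e₃, e₃² = 0; and μ_{3,4}: e₁² = e₂, e₂² = e₃, e₃² = 0 (all other products of distinct basis vectors are zero). Then μ_{3,3} is a formal evolution degeneration of μ_{3,4}, μ_{3,2} is a formal evolution degeneration of μ_{3,3}, and μ_{3,2} is a formal evolution degeneration of μ_{3,4}. Witnessing families are given respectively by g_t = diag(1,t,t²) + E₃₂, g_t = diag(t,1,t²), and g_t = diag(1,t,t²), where E₃₂ is the matrix unit with 1 in position (3,2). -/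
/-- `λ` is a formal evolution degeneration of `μ` (relative to the natural basis `e`). -/
def IsEvolutionDegeneration {V : Type*} [NormedAddCommGroup V] [NormedSpace ℂ V]
    {n : ℕ} (e : Fin n → V) (μ lam : V →ₗ[ℂ] V →ₗ[ℂ] V) : Prop :=
  ∃ g : ℝ → (V ≃ₗ[ℂ] V),
    (∀ x : V, ContinuousOn (fun t : ℝ => g t x) (Set.Ioc (0:ℝ) 1)) ∧
    (∀ t ∈ Set.Ioc (0:ℝ) 1, ∀ i j : Fin n, i ≠ j →
      g t (μ ((g t).symm (e i)) ((g t).symm (e j))) = 0) ∧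
    (∀ x y : V, Filter.Tendsto
      (fun t : ℝ => g t (μ ((g t).symm x) ((g t).symm y)))
      (nhdsWithin 0 (Set.Ioc (0:ℝ) 1)) (nhds (lam x y)))

/-!
A degeneration of `μ` amounts to a moving natural basis `f t` of `μ`, carried to the fixed basis `b`
by the linear map `b i ↦ a t i`, such that the image `c t i` of the square of `f t i` converges as
`t → 0`. By bilinearity nothing else has to be checked, and the linear map is invertible because its
range contains `b`. Each of the three degenerations is then a computation of three squares.
-/

open Filter Module Set Topology

section BasisReduction

variable {ι R V W T : Type*} [CommRing R] [AddCommGroup V] [Module R V]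

section Tendsto

variable [AddCommGroup W] [Module R W] [TopologicalSpace W] [ContinuousAdd W]
  [ContinuousConstSMul R W] {l : Filter T}

theorem tendsto_linearMap_apply_of_basis (b : Basis ι R V) {A : T → V →ₗ[R] W} {A₀ : V →ₗ[R] W}
    (h : ∀ i, Tendsto (fun t => A t (b i)) l (𝓝 (A₀ (b i)))) (x : V) :
    Tendsto (fun t => A t x) l (𝓝 (A₀ x)) := by
  rw [← b.linearCombination_repr x]
  simp only [Finsupp.linearCombination_apply, map_finsuppSum, map_smul]
  exact tendsto_finsetSum _ fun i _ => (h i).const_smul _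

theorem tendsto_bilin_apply_of_basis (b : Basis ι R V) {ν : T → V →ₗ[R] V →ₗ[R] W}
    {ν₀ : V →ₗ[R] V →ₗ[R] W}
    (h : ∀ i j, Tendsto (fun t => ν t (b i) (b j)) l (𝓝 (ν₀ (b i) (b j)))) (x y : V) :
    Tendsto (fun t => ν t x y) l (𝓝 (ν₀ x y)) :=
  tendsto_linearMap_apply_of_basis (A := fun t => (ν t).flip y) (A₀ := ν₀.flip y) b
    (fun i => tendsto_linearMap_apply_of_basis b (h i) y) x

end Tendsto

theorem exists_linearEquiv_coe_eq_of_basis_mem_range [Finite ι] (b : Basis ι R V) {A : V →ₗ[R] V}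
    (h : ∀ i, b i ∈ LinearMap.range A) : ∃ g : V ≃ₗ[R] V, (g : V →ₗ[R] V) = A := by
  have : Module.Finite R V := Module.Finite.of_basis b
  have hsurj : Function.Surjective A := by
    rw [← LinearMap.range_eq_top, eq_top_iff, ← b.span_eq, Submodule.span_le]
    exact range_subset_iff.2 h
  exact ⟨LinearEquiv.ofBijective A
    ⟨OrzechProperty.injective_of_surjective_endomorphism A hsurj, hsurj⟩, rfl⟩

end BasisReduction

section EvolutionProduct

variable {ι R V W : Type*} [CommRing R] [AddCommGroup V] [Module R V] [AddCommGroup W] [Module R W]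

/-- The bilinear map `μ` is an evolution product on the family `v`: distinct members multiply to
zero, and `v i` has square `s i`. When `v` is a basis, this says that `v` is a natural basis of the
evolution algebra `μ` and determines `μ`. The values may lie in a second module, so that a product
can be considered after composing it with a linear map. -/
structure IsEvolutionProduct (μ : V →ₗ[R] V →ₗ[R] W) (v : ι → V) (s : ι → W) : Prop where
  apply_of_ne : ∀ i j, i ≠ j → μ (v i) (v j) = 0
  apply_self : ∀ i, μ (v i) (v i) = s i

/-- The product `g · μ` obtained from `μ` by the change of basis `g`. -/
def basisChange (g : V ≃ₗ[R] V) (μ : V →ₗ[R] V →ₗ[R] V) : V →ₗ[R] V →ₗ[R] V :=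
  (μ.compl₁₂ g.symm.toLinearMap g.symm.toLinearMap).compr₂ g.toLinearMap

theorem IsEvolutionProduct.tendsto_apply_of_basis {T : Type*} [TopologicalSpace W]
    [ContinuousAdd W] [ContinuousConstSMul R W] {l : Filter T} (b : Basis ι R V)
    {ν : T → V →ₗ[R] V →ₗ[R] W} {ν₀ : V →ₗ[R] V →ₗ[R] W} {c : T → ι → W} {c₀ : ι → W}
    (hν : ∀ᶠ t in l, IsEvolutionProduct (ν t) b (c t)) (hν₀ : IsEvolutionProduct ν₀ b c₀)
    (hc : Tendsto c l (𝓝 c₀)) (x y : V) :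
    Tendsto (fun t => ν t x y) l (𝓝 (ν₀ x y)) := by
  refine tendsto_bilin_apply_of_basis b (fun i j => ?_) x y
  obtain rfl | hij := eq_or_ne i j
  · rw [hν₀.apply_self]
    exact (tendsto_pi_nhds.1 hc i).congr' (hν.mono fun t ht => (ht.apply_self i).symm)
  · rw [hν₀.apply_of_ne i j hij]
    exact tendsto_const_nhds.congr' (hν.mono fun t ht => (ht.apply_of_ne i j hij).symm)

end EvolutionProduct

section Degeneration

variable {V : Type*} [NormedAddCommGroup V] [NormedSpace ℂ V] {n : ℕ} (b : Basis (Fin n) ℂ V)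
  {μ lam : V →ₗ[ℂ] V →ₗ[ℂ] V}

theorem isEvolutionDegeneration_of_basisChange (g : ℝ → V ≃ₗ[ℂ] V)
    {c : ℝ → Fin n → V} {s : Fin n → V}
    (hg : ∀ i, ContinuousOn (fun t => g t (b i)) (Ioc 0 1))
    (hμ : ∀ t ∈ Ioc 0 1, IsEvolutionProduct (basisChange (g t) μ) b (c t))
    (hlam : IsEvolutionProduct lam b s) (hc : Tendsto c (𝓝[Ioc 0 1] 0) (𝓝 s)) :
    IsEvolutionDegeneration b μ lam :=
  ⟨g,
    fun x t ht => tendsto_linearMap_apply_of_basis (A := fun t => (g t).toLinearMap) b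
      (fun i => hg i t ht) x,
    fun t ht => (hμ t ht).apply_of_ne,
    IsEvolutionProduct.tendsto_apply_of_basis b (eventually_mem_nhdsWithin.mono hμ) hlam hc⟩

theorem isEvolutionDegeneration_of_natural_bases (a f c : ℝ → Fin n → V) {s : Fin n → V}
    (ha : ContinuousOn a (Ioc 0 1))
    (hf : ∀ t ∈ Ioc 0 1, ∀ i, b.constr ℂ (a t) (f t i) = b i)
    (hμ : ∀ t ∈ Ioc 0 1, IsEvolutionProduct (μ.compr₂ (b.constr ℂ (a t))) (f t) (c t))
    (hlam : IsEvolutionProduct lam b s) (hc : Tendsto c (𝓝[Ioc 0 1] 0) (𝓝 s)) :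
    IsEvolutionDegeneration b μ lam := by
  have hinv : ∀ t, ∃ g : V ≃ₗ[ℂ] V, t ∈ Ioc 0 1 → g.toLinearMap = b.constr ℂ (a t) := by
    intro t
    by_cases ht : t ∈ Ioc 0 1
    · obtain ⟨g, hg⟩ := exists_linearEquiv_coe_eq_of_basis_mem_range b
        fun i => ⟨f t i, hf t ht i⟩
      exact ⟨g, fun _ => hg⟩
    · exact ⟨LinearEquiv.refl ℂ V, fun h => absurd h ht⟩
  choose g hgA using hinv
  have g_apply : ∀ t ∈ Ioc 0 1, ∀ x, g t x = b.constr ℂ (a t) x := fun t ht =>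
    LinearMap.congr_fun (hgA t ht)
  have symm_apply : ∀ t ∈ Ioc 0 1, ∀ i, (g t).symm (b i) = f t i := fun t ht i => by
    rw [LinearEquiv.symm_apply_eq, g_apply t ht, hf t ht]
  have basisChange_apply : ∀ t ∈ Ioc 0 1, ∀ i j,
      basisChange (g t) μ (b i) (b j) = μ.compr₂ (b.constr ℂ (a t)) (f t i) (f t j) := by
    intro t ht i j
    simp only [basisChange, LinearMap.compr₂_apply, LinearMap.compl₁₂_apply,
      LinearEquiv.coe_coe, symm_apply t ht, g_apply t ht]
  refine isEvolutionDegeneration_of_basisChange b g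
    (fun i => (continuousOn_pi.1 ha i).congr fun t ht => ?_) (fun t ht => ⟨?_, ?_⟩) hlam hc
  · rw [g_apply t ht, b.constr_basis]
  · simpa only [basisChange_apply t ht] using (hμ t ht).apply_of_ne
  · simpa only [basisChange_apply t ht] using (hμ t ht).apply_self

end Degeneration

section DimensionThree

variable {V : Type*} [NormedAddCommGroup V] [NormedSpace ℂ V] (b : Basis (Fin 3) ℂ V)
  {μ32 μ33 μ34 : V →ₗ[ℂ] V →ₗ[ℂ] V}

theorem isEvolutionDegeneration_mu34_mu33 (h34 : IsEvolutionProduct μ34 b ![b 1, b 2, 0])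
    (h33 : IsEvolutionProduct μ33 b ![b 2, b 2, 0]) : IsEvolutionDegeneration b μ34 μ33 := by
  refine isEvolutionDegeneration_of_natural_bases b
    (a := fun t => ![b 0, (t : ℂ) • b 1 + b 2, (t : ℂ) ^ 2 • b 2])
    (f := fun t => ![b 0, (t : ℂ)⁻¹ • b 1 - (t : ℂ)⁻¹ ^ 3 • b 2, (t : ℂ)⁻¹ ^ 2 • b 2])
    (c := fun t => ![(t : ℂ) • b 1 + b 2, b 2, 0])
    (by fun_prop) (fun t ht => ?_) (fun t ht => ⟨?_, ?_⟩) h33 ?_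
  · have ht₀ : (t : ℂ) ≠ 0 := mod_cast ht.1.ne'
    have cancel_b2 : ((t : ℂ) ^ 3)⁻¹ * (t : ℂ) ^ 2 = (t : ℂ)⁻¹ := by field_simp
    simp [Fin.forall_fin_succ, b.constr_basis, smul_smul, ht₀, cancel_b2,
      -Basis.constr_apply_fintype, -Complex.coe_smul]
  · simp [Fin.forall_fin_succ, h34.apply_of_ne, h34.apply_self]
  · have ht₀ : (t : ℂ) ≠ 0 := mod_cast ht.1.ne'
    have scale_sq : (t : ℂ)⁻¹ * ((t : ℂ)⁻¹ * (t : ℂ) ^ 2) = 1 := by field_simp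
    simp [Fin.forall_fin_succ, h34.apply_of_ne, h34.apply_self, b.constr_basis, smul_smul,
      mul_assoc, scale_sq, -Basis.constr_apply_fintype, -Complex.coe_smul]
  · exact (Continuous.tendsto' (by fun_prop) 0 _ (by simp)).mono_left nhdsWithin_le_nhds

-- `diag(t, 1, t²)` alone leads to the limit `e₁² = e₃`, which is only isomorphic to `μ32`; it is
-- therefore followed by the exchange of `e₂` and `e₃`.
theorem isEvolutionDegeneration_mu33_mu32 (h33 : IsEvolutionProduct μ33 b ![b 2, b 2, 0])
    (h32 : IsEvolutionProduct μ32 b ![b 1, 0, 0]) : IsEvolutionDegeneration b μ33 μ32 := by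
  refine isEvolutionDegeneration_of_natural_bases b
    (a := fun t => ![(t : ℂ) • b 0, b 2, (t : ℂ) ^ 2 • b 1])
    (f := fun t => ![(t : ℂ)⁻¹ • b 0, (t : ℂ)⁻¹ ^ 2 • b 2, b 1])
    (c := fun t => ![b 1, 0, (t : ℂ) ^ 2 • b 1])
    (by fun_prop) (fun t ht => ?_) (fun t ht => ⟨?_, ?_⟩) h32 ?_
  · have ht₀ : (t : ℂ) ≠ 0 := mod_cast ht.1.ne'
    simp [Fin.forall_fin_succ, b.constr_basis, ht₀, -Basis.constr_apply_fintype,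
      -Complex.coe_smul]
  · simp [Fin.forall_fin_succ, h33.apply_of_ne]
  · have ht₀ : (t : ℂ) ≠ 0 := mod_cast ht.1.ne'
    have scale_sq : (t : ℂ)⁻¹ * ((t : ℂ)⁻¹ * (t : ℂ) ^ 2) = 1 := by field_simp
    simp [Fin.forall_fin_succ, h33.apply_self, b.constr_basis, smul_smul, mul_assoc, scale_sq,
      -Basis.constr_apply_fintype, -Complex.coe_smul]
  · exact (Continuous.tendsto' (by fun_prop) 0 _ (by simp)).mono_left nhdsWithin_le_nhds

-- `diag(1, t, t²)` leads to the limit `e₂² = e₃`, which is only isomorphic to `μ32`; the limit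
-- under `diag(1, 1, t)` is `μ32` itself.
theorem isEvolutionDegeneration_mu34_mu32 (h34 : IsEvolutionProduct μ34 b ![b 1, b 2, 0])
    (h32 : IsEvolutionProduct μ32 b ![b 1, 0, 0]) : IsEvolutionDegeneration b μ34 μ32 := by
  refine isEvolutionDegeneration_of_natural_bases b
    (a := fun t => ![b 0, b 1, (t : ℂ) • b 2])
    (f := fun t => ![b 0, b 1, (t : ℂ)⁻¹ • b 2])
    (c := fun t => ![b 1, (t : ℂ) • b 2, 0])
    (by fun_prop) (fun t ht => ?_) (fun t _ => ⟨?_, ?_⟩) h32 ?_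
  · have ht₀ : (t : ℂ) ≠ 0 := mod_cast ht.1.ne'
    simp [Fin.forall_fin_succ, b.constr_basis, ht₀, -Basis.constr_apply_fintype,
      -Complex.coe_smul]
  · simp [Fin.forall_fin_succ, h34.apply_of_ne]
  · simp [Fin.forall_fin_succ, h34.apply_self, b.constr_basis, -Basis.constr_apply_fintype]
  · exact (Continuous.tendsto' (by fun_prop) 0 _ (by simp)).mono_left nhdsWithin_le_nhds

theorem stmt18_general (h32 : IsEvolutionProduct μ32 b ![b 1, 0, 0])
    (h33 : IsEvolutionProduct μ33 b ![b 2, b 2, 0])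
    (h34 : IsEvolutionProduct μ34 b ![b 1, b 2, 0]) :
    IsEvolutionDegeneration b μ34 μ33 ∧
    IsEvolutionDegeneration b μ33 μ32 ∧
    IsEvolutionDegeneration b μ34 μ32 :=
  ⟨isEvolutionDegeneration_mu34_mu33 b h34 h33, isEvolutionDegeneration_mu33_mu32 b h33 h32,
    isEvolutionDegeneration_mu34_mu32 b h34 h32⟩

end DimensionThree

/-- Among the nilpotent evolution algebras `μ₃₂ : e₁² = e₂`,
`μ₃₃ : e₁² = e₂² = e₃`, `μ₃₄ : e₁² = e₂, e₂² = e₃` on `ℂ³`, one has the formal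
evolution degenerations `μ₃₄ → μ₃₃`, `μ₃₃ → μ₃₂` and `μ₃₄ → μ₃₂`. -/
theorem stmt18 (e : Fin 3 → (Fin 3 → ℂ)) (he : ∀ i, e i = Pi.single i 1)
    (μ32 μ33 μ34 : (Fin 3 → ℂ) →ₗ[ℂ] (Fin 3 → ℂ) →ₗ[ℂ] (Fin 3 → ℂ))
    (h32z : ∀ i j : Fin 3, i ≠ j → μ32 (e i) (e j) = 0)
    (h32a : μ32 (e 0) (e 0) = e 1) (h32b : μ32 (e 1) (e 1) = 0)
    (h32c : μ32 (e 2) (e 2) = 0)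
    (h33z : ∀ i j : Fin 3, i ≠ j → μ33 (e i) (e j) = 0)
    (h33a : μ33 (e 0) (e 0) = e 2) (h33b : μ33 (e 1) (e 1) = e 2)
    (h33c : μ33 (e 2) (e 2) = 0)
    (h34z : ∀ i j : Fin 3, i ≠ j → μ34 (e i) (e j) = 0)
    (h34a : μ34 (e 0) (e 0) = e 1) (h34b : μ34 (e 1) (e 1) = e 2)
    (h34c : μ34 (e 2) (e 2) = 0) :
    IsEvolutionDegeneration e μ34 μ33 ∧
    IsEvolutionDegeneration e μ33 μ32 ∧
    IsEvolutionDegeneration e μ34 μ32 := by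
  obtain rfl : e = Pi.basisFun ℂ (Fin 3) := funext fun i => by rw [he, Pi.basisFun_apply]
  exact stmt18_general (Pi.basisFun ℂ (Fin 3))
    ⟨h32z, fun | 0 => h32a | 1 => h32b | 2 => h32c⟩
    ⟨h33z, fun | 0 => h33a | 1 => h33b | 2 => h33c⟩
    ⟨h34z, fun | 0 => h34a | 1 => h34b | 2 => h34c⟩
end

section
/- On ℂ² with basis e₁, e₂, consider the evolution algebra structures μ₁: e₁² = e₁, e₂² = e₂, and μ₃: e₁² = e₂, e₂² = 0 (products of distinct basis vectors are zero). Then μ₃ is NOT a formal evolution degeneration of μ₁: there is no continuous map g : (0,1] → GL(ℂ²) such that each g_t defines a natural basis change of μ₁ (i.e., (g_t·μ₁)(e₁,e₂) = 0 for all t ∈ (0,1]) and (g_t·μ₁)(x,y) → μ₃(x,y) as t → 0⁺ for all x,y ∈ ℂ². (In particular, formal evolution degeneration is not a transitive relation, since μ₁ degenerates to μ₂: e₁² = e₁, e₂² = 0, and μ₂ degenerates to μ₃.) -/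
/-!
If the squares of a natural basis `b` are linearly independent, then `μ x y = 0` forces `x` and `y`
to have disjoint supports with respect to `b`. Any other natural basis therefore has pairwise
disjoint nonempty supports, as many as there are basis vectors, so each support is a single point
and the basis is obtained from `b` by permuting and rescaling. When moreover every `b i` squares to
a multiple of itself, the same holds for every natural basis, and this is a closed condition: in any
formal evolution degeneration each `e i` still squares to a multiple of itself, which fails for
`e₁² = e₂`.
-/

theorem exists_perm_eq_singleton_of_pairwise_disjoint {ι : Type*} [Finite ι] {s : ι → Finset ι}
    (hne : ∀ i, (s i).Nonempty) (hdisj : Pairwise fun i j => Disjoint (s i) (s j)) :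
    ∃ σ : Equiv.Perm ι, ∀ i, s i = {σ i} := by
  choose f hf using hne
  have eq_of_mem {i j k : ι} (hi : k ∈ s i) (hj : k ∈ s j) : i = j :=
    by_contra fun hij => Finset.disjoint_left.1 (hdisj hij) hi hj
  have f_injective : Function.Injective f := fun i j hij => eq_of_mem (hf i) (hij ▸ hf j)
  have f_bijective : Function.Bijective f := Finite.injective_iff_bijective.1 f_injective
  refine ⟨Equiv.ofBijective f f_bijective, fun i => ?_⟩
  refine Finset.eq_singleton_iff_unique_mem.2 ⟨hf i, fun k hk => ?_⟩
  obtain ⟨j, rfl⟩ := f_bijective.surjective k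
  exact congrArg f (eq_of_mem (hf j) hk)

section NaturalBasis

variable {ι R M N : Type*} [CommSemiring R] [AddCommMonoid M] [Module R M]
  [AddCommMonoid N] [Module R N]

theorem apply_eq_linearCombination_of_isOrthoᵢ {μ : M →ₗ[R] M →ₗ[R] N} {b : Module.Basis ι R M}
    (hb : μ.IsOrthoᵢ b) (x y : M) :
    μ x y = Finsupp.linearCombination R (fun k => μ (b k) (b k)) (b.repr x * b.repr y) := by
  have inner_sum_eq (k : ι) : ((b.repr y).sum fun l yl => b.repr x k • yl • μ (b k) (b l)) =
      (b.repr x * b.repr y) k • μ (b k) (b k) := by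
    rw [Finsupp.sum_eq_single k, Finsupp.mul_apply, mul_smul]
    · intro l _ hlk
      rw [hb hlk.symm, smul_zero, smul_zero]
    · simp
  have support_subset : (b.repr x * b.repr y).support ⊆ (b.repr x).support := fun k hk =>
    Finsupp.mem_support_iff.2 (left_ne_zero_of_mul (Finsupp.mem_support_iff.1 hk))
  rw [← LinearMap.sum_repr_mul_repr_mul b b, Finsupp.linearCombination_apply,
    Finsupp.sum_of_support_subset _ support_subset _ (by simp)]
  exact Finset.sum_congr rfl fun k _ => inner_sum_eq k

variable [NoZeroDivisors R]

theorem disjoint_support_repr_of_apply_eq_zero {μ : M →ₗ[R] M →ₗ[R] N} {b : Module.Basis ι R M}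
    (hb : μ.IsOrthoᵢ b) (hsq : LinearIndependent R fun k => μ (b k) (b k)) {x y : M}
    (hxy : μ x y = 0) : Disjoint (b.repr x).support (b.repr y).support := by
  have repr_mul_repr : b.repr x * b.repr y = 0 := by
    apply hsq
    rw [← apply_eq_linearCombination_of_isOrthoᵢ hb, hxy, map_zero]
  refine Finset.disjoint_left.2 fun k hx hy => ?_
  exact mul_ne_zero (Finsupp.mem_support_iff.1 hx) (Finsupp.mem_support_iff.1 hy)
    (DFunLike.congr_fun repr_mul_repr k)

theorem exists_perm_eq_smul_of_isOrthoᵢ [Finite ι] {μ : M →ₗ[R] M →ₗ[R] N} {b : Module.Basis ι R M}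
    (hb : μ.IsOrthoᵢ b) (hsq : LinearIndependent R fun k => μ (b k) (b k)) {u : ι → M}
    (hu : μ.IsOrthoᵢ u) (hu₀ : ∀ i, u i ≠ 0) :
    ∃ (σ : Equiv.Perm ι) (c : ι → R), ∀ i, u i = c i • b (σ i) := by
  obtain ⟨σ, hσ⟩ := exists_perm_eq_singleton_of_pairwise_disjoint
    (s := fun i => (b.repr (u i)).support)
    (fun i => Finsupp.support_nonempty_iff.2 (b.repr.map_ne_zero_iff.2 (hu₀ i)))
    (fun i j hij => disjoint_support_repr_of_apply_eq_zero hb hsq (hu hij))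
  refine ⟨σ, fun i => b.repr (u i) (σ i), fun i => b.repr.injective ?_⟩
  rw [map_smul, b.repr_self, Finsupp.smul_single_one]
  exact (Finsupp.support_eq_singleton.1 (hσ i)).2

theorem apply_self_mem_span_singleton_of_isOrthoᵢ [Finite ι] {μ : M →ₗ[R] M →ₗ[R] M}
    {b : Module.Basis ι R M} (hb : μ.IsOrthoᵢ b)
    (hsq : LinearIndependent R fun k => μ (b k) (b k))
    (hdiag : ∀ k, μ (b k) (b k) ∈ Submodule.span R {b k}) {u : ι → M}
    (hu : μ.IsOrthoᵢ u) (hu₀ : ∀ i, u i ≠ 0) (i : ι) :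
    μ (u i) (u i) ∈ Submodule.span R {u i} := by
  obtain ⟨σ, c, hσ⟩ := exists_perm_eq_smul_of_isOrthoᵢ hb hsq hu hu₀
  obtain ⟨a, ha⟩ := Submodule.mem_span_singleton.1 (hdiag (σ i))
  refine Submodule.mem_span_singleton.2 ⟨c i * a, ?_⟩
  rw [hσ, LinearMap.map_smul₂, map_smul, ← ha]
  module

end NaturalBasis

section Degeneration

variable {V : Type*} [NormedAddCommGroup V] [NormedSpace ℂ V] {n : ℕ}
  {μ lam : V →ₗ[ℂ] V →ₗ[ℂ] V}

theorem IsEvolutionDegeneration.apply_mem_of_isClosed {e : Fin n → V}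
    (h : IsEvolutionDegeneration e μ lam) {s : Set V} (hs : IsClosed s) {x y : V}
    (hmem : ∀ g : V ≃ₗ[ℂ] V, μ.IsOrthoᵢ (fun i => g.symm (e i)) →
      g (μ (g.symm x) (g.symm y)) ∈ s) :
    lam x y ∈ s := by
  obtain ⟨g, -, hnat, hlim⟩ := h
  have : (nhdsWithin (0 : ℝ) (Set.Ioc 0 1)).NeBot := left_nhdsWithin_Ioc_neBot zero_lt_one
  refine hs.mem_of_tendsto (hlim x y) ?_
  filter_upwards [self_mem_nhdsWithin] with t ht
  exact hmem (g t) fun i j hij => (g t).map_eq_zero_iff.1 (hnat t ht i j hij)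

theorem stmt19_general {e : Module.Basis (Fin n) ℂ V} (hμ : μ.IsOrthoᵢ e)
    (hsq : LinearIndependent ℂ fun k => μ (e k) (e k))
    (hdiag : ∀ k, μ (e k) (e k) ∈ Submodule.span ℂ {e k})
    {i : Fin n} (hlam : lam (e i) (e i) ∉ Submodule.span ℂ {e i}) :
    ¬ IsEvolutionDegeneration e μ lam := by
  refine fun h => hlam (h.apply_mem_of_isClosed (Submodule.closed_of_finiteDimensional _) ?_)
  intro g hg
  have square_mem_span := apply_self_mem_span_singleton_of_isOrthoᵢ hμ hsq hdiag hg
    (fun k => g.symm.map_ne_zero_iff.2 (e.ne_zero k)) i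
  obtain ⟨c, hc⟩ := Submodule.mem_span_singleton.1 square_mem_span
  refine Submodule.mem_span_singleton.2 ⟨c, ?_⟩
  rw [← hc, map_smul, g.apply_symm_apply]

end Degeneration

/-- On `ℂ²`, the evolution algebra `μ₃ : e₁² = e₂, e₂² = 0` is NOT a
formal evolution degeneration of `μ₁ : e₁² = e₁, e₂² = e₂`. -/
theorem stmt19 (e : Fin 2 → (Fin 2 → ℂ)) (he : ∀ i, e i = Pi.single i 1)
    (μ1 μ3 : (Fin 2 → ℂ) →ₗ[ℂ] (Fin 2 → ℂ) →ₗ[ℂ] (Fin 2 → ℂ))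
    (h1z : ∀ i j : Fin 2, i ≠ j → μ1 (e i) (e j) = 0)
    (h1a : μ1 (e 0) (e 0) = e 0) (h1b : μ1 (e 1) (e 1) = e 1)
    (h3z : ∀ i j : Fin 2, i ≠ j → μ3 (e i) (e j) = 0)
    (h3a : μ3 (e 0) (e 0) = e 1) (h3b : μ3 (e 1) (e 1) = 0) :
    ¬ IsEvolutionDegeneration e μ1 μ3 := by
  obtain rfl : e = Pi.basisFun ℂ (Fin 2) := funext fun i => by rw [he, Pi.basisFun_apply]
  have hsq : ∀ k, μ1 (Pi.basisFun ℂ (Fin 2) k) (Pi.basisFun ℂ (Fin 2) k) =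
      Pi.basisFun ℂ (Fin 2) k := Fin.forall_fin_two.2 ⟨h1a, h1b⟩
  refine stmt19_general (i := 0) h1z ?_ (fun k => ?_) ?_
  · simpa only [hsq] using (Pi.basisFun ℂ (Fin 2)).linearIndependent
  · rw [hsq]
    exact Submodule.mem_span_singleton_self _
  · rw [h3a, Submodule.mem_span_singleton]
    rintro ⟨c, hc⟩
    simpa using congrFun hc 1
end
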